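/- Let n ≥ 1 and let κ₀, κ₁, …, κ_{n−1} : ℝ → ℂ be continuous functions. Then there exist continuous functions λ₁, …, λₙ : ℝ → ℂ such that for every μ ∈ ℝ, the multiset {λ₁(μ), …, λₙ(μ)} is exactly the multiset of roots (with multiplicity) of the monic polynomial X^n + κ_{n−1}(μ)·X^{n−1} + ⋯ + κ₁(μ)·X + κ₀(μ) over ℂ. -/

import Mathlib

/-!
Sending `n` roots to the lower coefficients of the monic polynomial having them defines a map
`Kⁿ → Kⁿ` which is surjective (`K` is algebraically closed), closed (roots are bounded in terms of
coefficients, so the map is proper) and open (its fibers are permutation orbits), with finite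
fibers. The theorem says that paths lift along this map.

Paths lift along every such map from a metric space. Along a finite set of parameters, go from each
parameter to the next by jumping to a nearest point of the next fiber. When all parameters in an
interval around `t` have fibers close to the fiber over `t`, the jumps are too short to pass from
one point of that finite fiber to another, no matter which parameters were chosen. By Rado's
selection lemma, these finite partial lifts can be merged into one defined everywhere.
-/

open Filter Topology Polynomial

section Selection

theorem iff_of_forall_covBy {ι : Type*} [LinearOrder ι] [LocallyFiniteOrder ι] {P : ι → Prop}
    (h : ∀ a b, a ⋖ b → (P a ↔ P b)) (a b : ι) : P a ↔ P b := by
  have hmono : Monotone P := (monotone_iff_forall_covBy P).2 fun a b hab => (h a b hab).1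
  have hanti : Antitone P := (antitone_iff_forall_covBy P).2 fun a b hab => (h a b hab).2
  rcases le_total a b with hab | hba
  · exact ⟨hmono hab, hanti hab⟩
  · exact ⟨hanti hba, hmono hba⟩

theorem iff_of_forall_consecutive_of_ordConnected {T : Type*} [LinearOrder T] {A : Set T}
    (hA : A.OrdConnected) {F : Finset T} {P : T → Prop}
    (h : ∀ a ∈ F, ∀ b ∈ F, a ∈ A → b ∈ A → a < b → (∀ c ∈ F, c ∉ Set.Ioo a b) → (P a ↔ P b))
    {s t : T} (hsF : s ∈ F) (htF : t ∈ F) (hsA : s ∈ A) (htA : t ∈ A) : P s ↔ P t := by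
  classical
  let G := F.filter (· ∈ A)
  have hG {r : T} : r ∈ G ↔ r ∈ F ∧ r ∈ A := Finset.mem_filter
  let : LocallyFiniteOrder G := Fintype.toLocallyFiniteOrder
  refine iff_of_forall_covBy (P := fun r : G => P r) (fun a b hab => ?_)
    ⟨s, hG.2 ⟨hsF, hsA⟩⟩ ⟨t, hG.2 ⟨htF, htA⟩⟩
  obtain ⟨haF, haA⟩ := hG.1 a.2
  obtain ⟨hbF, hbA⟩ := hG.1 b.2
  refine h a haF b hbF haA hbA hab.lt fun c hcF hc => ?_
  have hcA : c ∈ A := hA.out haA hbA (Set.Ioo_subset_Icc_self hc)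
  exact hab.2 (c := ⟨c, hG.2 ⟨hcF, hcA⟩⟩) hc.1 hc.2

theorem eventually_forall_exists_dist_lt_of_upperHemicontinuousAt {T E : Type*}
    [TopologicalSpace T] [PseudoMetricSpace E] {R : T → Set E} {t : T}
    (hR : UpperHemicontinuousAt R t) {ε : ℝ} (hε : 0 < ε) :
    ∀ᶠ s in 𝓝 t, ∀ v ∈ R s, ∃ p ∈ R t, dist v p < ε := by
  filter_upwards [hR.forall_isOpen _ Metric.isOpen_thickening
    (Metric.self_subset_thickening hε (R t))] with s hs v hv
  exact Metric.mem_thickening_iff.1 (hs hv)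

theorem eventually_forall_exists_dist_lt_of_lowerHemicontinuousAt {T E : Type*}
    [TopologicalSpace T] [PseudoMetricSpace E] {R : T → Set E} {t : T}
    (hR : LowerHemicontinuousAt R t) (hfin : (R t).Finite) {ε : ℝ} (hε : 0 < ε) :
    ∀ᶠ s in 𝓝 t, ∀ p ∈ R t, ∃ v ∈ R s, dist p v < ε := by
  refine (eventually_all_finite hfin).2 fun p hp => ?_
  filter_upwards [lowerHemicontinuousAt_iff.1 hR (Metric.ball p ε) Metric.isOpen_ball
    ⟨p, hp, Metric.mem_ball_self hε⟩] with s hs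
  obtain ⟨v, hv, hvp⟩ := hs
  exact ⟨v, hv, Metric.mem_ball'.1 hvp⟩

variable {T E : Type*} [LinearOrder T]

/-- The selection `u` of the multifunction `R` follows the greedy rule on the finite set `F` of
parameters: between consecutive `a < b` in `F` it jumps to a point of `R b` nearest to `u a`. -/
def IsGreedyOn [PseudoMetricSpace E] (R : T → Set E) (F : Finset T) (u : T → E) : Prop :=
  ∀ a ∈ F, ∀ b ∈ F, a < b → (∀ c ∈ F, c ∉ Set.Ioo a b) → ∀ w ∈ R b, dist (u a) (u b) ≤ dist (u a) w

theorem exists_isGreedyOn [PseudoMetricSpace E] {R : T → Set E} (hfin : ∀ t, (R t).Finite)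
    (hne : ∀ t, (R t).Nonempty) (F : Finset T) :
    ∃ u : T → E, (∀ t, u t ∈ R t) ∧ IsGreedyOn R F u := by
  induction F using Finset.induction_on_max with
  | empty =>
    choose u hu using hne
    exact ⟨u, hu, by simp [IsGreedyOn]⟩
  | insert b F hlt ih =>
    obtain ⟨u, hu, hgreedy⟩ := ih
    obtain ⟨y, hy, hnearest⟩ : ∃ y ∈ R b, ∀ a ∈ F, (∀ c ∈ F, c ≤ a) →
        ∀ w ∈ R b, dist (u a) y ≤ dist (u a) w := by
      rcases F.eq_empty_or_nonempty with rfl | hF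
      · exact (hne b).imp fun y hy => ⟨hy, by simp⟩
      · obtain ⟨y, hy, hmin⟩ :=
          Set.exists_min_image (R b) (dist (u (F.max' hF))) (hfin b) (hne b)
        refine ⟨y, hy, fun a ha hmax => ?_⟩
        rwa [le_antisymm (F.le_max' a ha) (hmax _ (F.max'_mem hF))]
    refine ⟨Function.update u b y, fun t => ?_, fun a ha c hc hac hgap w hw => ?_⟩
    · rcases eq_or_ne t b with rfl | htb
      · rwa [Function.update_self]
      · rw [Function.update_of_ne htb]
        exact hu t
    · have hle : ∀ x ∈ insert b F, x ≤ b := fun x hx =>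
        (Finset.mem_insert.1 hx).elim Eq.le fun hxF => (hlt x hxF).le
      have hab : a ≠ b := (hac.trans_le (hle c hc)).ne
      have haF : a ∈ F := Finset.mem_of_mem_insert_of_ne ha hab
      have hgapF : ∀ x ∈ F, x ∉ Set.Ioo a c := fun x hx => hgap x (Finset.mem_insert_of_mem hx)
      rw [Function.update_of_ne hab]
      rcases eq_or_ne c b with rfl | hcb
      · rw [Function.update_self]
        exact hnearest a haF (fun x hx => not_lt.1 fun hax => hgapF x hx ⟨hax, hlt x hx⟩) w hw
      · rw [Function.update_of_ne hcb]
        exact hgreedy a haF c (Finset.mem_of_mem_insert_of_ne hc hcb) hac hgapF w hw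

theorem IsGreedyOn.dist_lt [PseudoMetricSpace E] {R : T → Set E} {F : Finset T} {u : T → E}
    (hgreedy : IsGreedyOn R F u) (hu : ∀ t, u t ∈ R t) {A : Set T} (hA : A.OrdConnected)
    {S : Set E} {p : E} {ε : ℝ} (hp : ∀ q ∈ S, dist q p < 4 * ε → q = p)
    (hRS : ∀ r ∈ A, ∀ v ∈ R r, ∃ q ∈ S, dist v q < ε)
    (hSR : ∀ r ∈ A, ∀ q ∈ S, ∃ w ∈ R r, dist q w < ε)
    {s t : T} (hsF : s ∈ F) (htF : t ∈ F) (hsA : s ∈ A) (htA : t ∈ A) (ht : dist (u t) p < ε) :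
    dist (u s) p < ε := by
  have jump {a b : T} (hb : b ∈ A) (hab : dist (u a) (u b) < 2 * ε)
      (hap : dist (u a) p < ε) : dist (u b) p < ε := by
    obtain ⟨q, hq, hbq⟩ := hRS b hb _ (hu b)
    suffices q = p by rwa [← this]
    refine hp q hq ?_
    linarith [dist_triangle4 q (u b) (u a) p, dist_comm q (u b), dist_comm (u a) (u b)]
  refine (iff_of_forall_consecutive_of_ordConnected hA (P := fun r => dist (u r) p < ε)
    (fun a haF b hbF haA hbA hab hgap => ?_) hsF htF hsA htA).2 ht
  have hshort : dist (u a) (u b) < 2 * ε := by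
    obtain ⟨q, hq, haq⟩ := hRS a haA _ (hu a)
    obtain ⟨w, hw, hqw⟩ := hSR b hbA q hq
    linarith [hgreedy a haF b hbF hab hgap w hw, dist_triangle (u a) q w]
  exact ⟨jump hbA hshort, jump haA (dist_comm (u a) (u b) ▸ hshort)⟩

theorem exists_continuous_selection_of_finite [TopologicalSpace T] [OrderTopology T]
    [MetricSpace E] {R : T → Set E} (hupper : UpperHemicontinuous R)
    (hlower : LowerHemicontinuous R) (hfin : ∀ t, (R t).Finite) (hne : ∀ t, (R t).Nonempty) :
    ∃ f : T → E, Continuous f ∧ ∀ t, f t ∈ R t := by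
  choose u hu hgreedy using exists_isGreedyOn hfin hne
  have := fun t => (hfin t).to_subtype
  obtain ⟨f, hf⟩ := Finset.rado_selection fun F t => (⟨u F t, hu F t⟩ : R t)
  refine ⟨fun t => f t, continuous_iff_continuousAt.2 fun t => ?_, fun t => (f t).2⟩
  refine Metric.continuousAt_iff'.2 fun η hη => ?_
  obtain ⟨g, hg, hiso⟩ :=
    Metric.exists_ball_inter_eq_singleton_of_mem_discrete (hfin t).isDiscrete (f t).2
  obtain ⟨ε, hε, hεη, hεg⟩ : ∃ ε > 0, ε ≤ η ∧ 4 * ε ≤ g :=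
    ⟨min η (g / 4), by positivity, min_le_left _ _, by linarith [min_le_right η (g / 4)]⟩
  have hisolated : ∀ q ∈ R t, dist q (f t) < 4 * ε → q = f t := fun q hq hqf =>
    hiso.subset ⟨Metric.mem_ball.2 (hqf.trans_le hεg), hq⟩
  have hnear := (eventually_forall_exists_dist_lt_of_upperHemicontinuousAt (hupper t) hε).and
    (eventually_forall_exists_dist_lt_of_lowerHemicontinuousAt (hlower t) (hfin t) hε)
  have huIcc : Tendsto (fun s => Set.uIcc s t) (𝓝 t) (𝓝 t).smallSets :=
    tendsto_id.uIcc tendsto_const_nhds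
  filter_upwards [tendsto_smallSets_iff.1 huIcc _ hnear] with s hs
  obtain ⟨F, hF, hfF⟩ := hf {s, t}
  have hfs : (f s : E) = u F s := congrArg Subtype.val (hfF s (by simp))
  have hft : (f t : E) = u F t := congrArg Subtype.val (hfF t (by simp))
  rw [hfs]
  refine ((hgreedy F).dist_lt (hu F) Set.ordConnected_uIcc hisolated (fun r hr => (hs hr).1)
    (fun r hr => (hs hr).2) (hF (by simp)) (hF (by simp)) Set.left_mem_uIcc Set.right_mem_uIcc
    ?_).trans_le hεη
  rwa [← hft, dist_self]

theorem exists_continuous_lift_of_isOpenMap_of_isClosedMap [TopologicalSpace T] [OrderTopology T]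
    [MetricSpace E] {B : Type*} [TopologicalSpace B] {Φ : E → B} (hopen : IsOpenMap Φ)
    (hclosed : IsClosedMap Φ) (hsurj : Φ.Surjective) (hfin : ∀ b, (Φ ⁻¹' {b}).Finite)
    {γ : T → B} (hγ : Continuous γ) : ∃ f : T → E, Continuous f ∧ ∀ t, Φ (f t) = γ t :=
  exists_continuous_selection_of_finite
    ((isClosedMap_iff_upperHemicontinuous.1 hclosed).comp hγ)
    ((isOpenMap_iff_lowerHemicontinuous.1 hopen).comp hγ) (fun _ => hfin _)
    fun t => hsurj (γ t)

end Selection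

theorem isOpenMap_of_fiberwise_transitive {E B : Type*} [TopologicalSpace E] [TopologicalSpace B]
    {Φ : E → B} (hΦ : IsQuotientMap Φ)
    (h : ∀ x y, Φ x = Φ y → ∃ g : E → E, Continuous g ∧ Φ ∘ g = Φ ∧ g x = y) : IsOpenMap Φ := by
  intro U hU
  rw [← hΦ.isOpen_preimage, isOpen_iff_mem_nhds]
  rintro x ⟨y, hy, hyx⟩
  obtain ⟨g, hg, hΦg, rfl⟩ := h x y hyx.symm
  filter_upwards [hg.continuousAt (hU.mem_nhds hy)] with z hz
  exact ⟨g z, hz, congrFun hΦg z⟩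

theorem exists_perm_comp_eq_of_map_univ_eq {ι α : Type*} [Fintype ι] {v w : ι → α}
    (h : Finset.univ.val.map v = Finset.univ.val.map w) : ∃ σ : Equiv.Perm ι, w ∘ σ = v := by
  classical
  have hcard (c : α) : Fintype.card {i // v i = c} = Fintype.card {i // w i = c} := by
    have hcount := congrArg (Multiset.count c) h
    simp only [Multiset.count_map, eq_comm (a := c)] at hcount
    rwa [Fintype.card_subtype, Fintype.card_subtype]
  let e (c : α) : {i // v i = c} ≃ {i // w i = c} := Fintype.equivOfCardEq (hcard c)
  refine ⟨(Equiv.sigmaFiberEquiv v).symm.trans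
    ((Equiv.sigmaCongrRight e).trans (Equiv.sigmaFiberEquiv w)), ?_⟩
  funext i
  exact (e (v i) ⟨i, rfl⟩).2

theorem exists_map_univ_eq_of_card_eq {α : Type*} {n : ℕ} {s : Multiset α}
    (hs : Multiset.card s = n) : ∃ v : Fin n → α, Finset.univ.val.map v = s := by
  obtain ⟨l, rfl⟩ : ∃ l : List α, (l : Multiset α) = s := Quot.exists_rep s
  subst hs
  exact ⟨l.get, (Fin.univ_val_map l.get).trans (congrArg _ (List.ofFn_get l))⟩

section Vieta

variable {R K : Type*} {n : ℕ}

/-- The map sending `n` roots to the coefficients of degrees `0, …, n - 1` of the monic polynomial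
of degree `n` with these roots. -/
noncomputable def vietaMap [CommRing R] (v : Fin n → R) : Fin n → R :=
  fun j => (∏ i, (X - C (v i))).coeff j

theorem prod_X_sub_C_eq_X_pow_add_sum_vietaMap [CommRing R] (v : Fin n → R) :
    ∏ i, (X - C (v i)) = X ^ n + ∑ j : Fin n, C (vietaMap v j) * X ^ (j : ℕ) := by
  nontriviality R
  have hmonic : (∏ i, (X - C (v i))).Monic := monic_prod_X_sub_C v _
  have hdeg : (∏ i, (X - C (v i))).natDegree = n := by simp
  conv_lhs => rw [hmonic.as_sum, hdeg]
  exact congrArg (X ^ n + ·)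
    (Fin.sum_univ_eq_sum_range (fun j => C ((∏ i, (X - C (v i))).coeff j) * X ^ j) n).symm

theorem roots_X_pow_add_sum_vietaMap [CommRing R] [IsDomain R] (v : Fin n → R) :
    (X ^ n + ∑ j : Fin n, C (vietaMap v j) * X ^ (j : ℕ)).roots = Finset.univ.val.map v := by
  rw [← prod_X_sub_C_eq_X_pow_add_sum_vietaMap]
  have h := roots_multiset_prod_X_sub_C (Finset.univ.val.map v)
  rw [Multiset.map_map] at h
  exact h

theorem vietaMap_comp_perm [CommRing R] (v : Fin n → R) (σ : Equiv.Perm (Fin n)) :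
    vietaMap (v ∘ σ) = vietaMap v := by
  funext j
  exact congrArg (coeff · j) (Equiv.prod_comp σ fun i => X - C (v i))

theorem vietaMap_eq_vietaMap_iff [CommRing R] [IsDomain R] {v w : Fin n → R} :
    vietaMap v = vietaMap w ↔ ∃ σ : Equiv.Perm (Fin n), w ∘ σ = v := by
  constructor
  · intro h
    apply exists_perm_comp_eq_of_map_univ_eq
    rw [← roots_X_pow_add_sum_vietaMap, h, roots_X_pow_add_sum_vietaMap]
  · rintro ⟨σ, rfl⟩
    exact vietaMap_comp_perm w σ

theorem finite_vietaMap_fiber [CommRing R] [IsDomain R] (c : Fin n → R) :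
    (vietaMap ⁻¹' {c}).Finite := by
  rcases (vietaMap ⁻¹' {c}).eq_empty_or_nonempty with hempty | ⟨w, rfl⟩
  · exact hempty ▸ Set.finite_empty
  · exact (Set.finite_range fun σ : Equiv.Perm (Fin n) => w ∘ σ).subset
      fun v hv => vietaMap_eq_vietaMap_iff.1 hv

theorem vietaMap_surjective [Field K] [IsAlgClosed K] :
    (vietaMap : (Fin n → K) → Fin n → K).Surjective := by
  intro c
  set p : K[X] := X ^ n + ∑ j : Fin n, C (c j) * X ^ (j : ℕ) with hp
  have hmonic : p.Monic := monic_X_pow_add (degree_sum_fin_lt c)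
  have hdeg : p.natDegree = n := natDegree_eq_of_degree_eq_some <| by
    rw [hp, degree_add_eq_left_of_degree_lt, degree_X_pow]
    simpa using degree_sum_fin_lt c
  obtain ⟨v, hv⟩ := exists_map_univ_eq_of_card_eq
    ((IsAlgClosed.card_roots_eq_natDegree (p := p)).trans hdeg)
  have hprod : ∏ i, (X - C (v i)) = p := by
    rw [(IsAlgClosed.splits p).eq_prod_roots_of_monic hmonic, ← hv, Multiset.map_map]
    rfl
  refine ⟨v, funext fun j => ?_⟩
  rw [vietaMap, hprod, hp]
  simp [coeff_X_pow, j.2.ne, Fin.val_inj]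

theorem continuous_vietaMap [CommRing R] [TopologicalSpace R] [IsTopologicalRing R] :
    Continuous (vietaMap : (Fin n → R) → Fin n → R) := by
  refine continuous_pi fun j => ?_
  have hcoeff (v : Fin n → R) : vietaMap v j =
      (-1) ^ (n - j : ℕ) * ∑ s ∈ Finset.univ.powersetCard (n - j : ℕ), ∏ i ∈ s, v i := by
    have h := Multiset.prod_X_sub_C_coeff (Finset.univ.val.map v) (k := j) (by simp [j.2.le])
    rw [Multiset.map_map, Multiset.card_map, Finset.card_val, Finset.card_univ, Fintype.card_fin,
      Finset.esymm_map_val] at h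
    exact h
  simp only [hcoeff]
  fun_prop

variable [NormedField K]

theorem norm_le_norm_vietaMap_add_one (v : Fin n → K) : ‖v‖ ≤ ‖vietaMap v‖ + 1 := by
  refine (pi_norm_le_iff_of_nonneg (by positivity)).2 fun i => ?_
  set p : K[X] := ∏ i, (X - C (v i)) with hp
  have hmonic : p.Monic := monic_prod_X_sub_C v _
  have hdeg : p.natDegree = n := by simp [hp]
  have hroot : p.IsRoot (v i) := by
    rw [IsRoot.def, hp, eval_prod]
    exact Finset.prod_eq_zero (Finset.mem_univ i) (by simp)
  have hbound : cauchyBound p ≤ ‖vietaMap v‖₊ + 1 := by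
    rw [cauchyBound, hmonic.leadingCoeff, nnnorm_one, div_one, hdeg]
    gcongr
    exact Finset.sup_le fun j hj => nnnorm_le_pi_nnnorm (vietaMap v) ⟨j, Finset.mem_range.1 hj⟩
  exact (hroot.norm_lt_cauchyBound hmonic.ne_zero).le.trans hbound

theorem isClosedMap_vietaMap [ProperSpace K] :
    IsClosedMap (vietaMap : (Fin n → K) → Fin n → K) := by
  refine (isProperMap_iff_tendsto_cocompact.2 ⟨continuous_vietaMap, ?_⟩).isClosedMap
  simp only [← Metric.cobounded_eq_cocompact, ← tendsto_norm_atTop_iff_cobounded]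
  exact tendsto_atTop_mono (fun v => sub_le_iff_le_add.2 (norm_le_norm_vietaMap_add_one v))
    (tendsto_atTop_add_const_right _ (-1) tendsto_norm_cobounded_atTop)

theorem isOpenMap_vietaMap [ProperSpace K] [IsAlgClosed K] :
    IsOpenMap (vietaMap : (Fin n → K) → Fin n → K) := by
  refine isOpenMap_of_fiberwise_transitive
    (isClosedMap_vietaMap.isQuotientMap continuous_vietaMap vietaMap_surjective) fun v w h => ?_
  obtain ⟨σ, hσ⟩ := vietaMap_eq_vietaMap_iff.1 h.symm
  exact ⟨(· ∘ σ), Pi.continuous_precomp σ, funext (vietaMap_comp_perm · σ), hσ⟩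

end Vieta

theorem stmt_7_general {T K : Type*} [LinearOrder T] [TopologicalSpace T] [OrderTopology T]
    [NormedField K] [ProperSpace K] [IsAlgClosed K] (n : ℕ) (κ : Fin n → T → K)
    (hκ : ∀ j, Continuous (κ j)) :
    ∃ lam : Fin n → T → K, (∀ j, Continuous (lam j)) ∧
      ∀ μ : T,
        (Finset.univ.val.map fun j : Fin n => lam j μ) =
          (X ^ n + ∑ j : Fin n, C (κ j μ) * X ^ (j : ℕ)).roots := by
  obtain ⟨f, hf, hfκ⟩ := exists_continuous_lift_of_isOpenMap_of_isClosedMap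
    isOpenMap_vietaMap isClosedMap_vietaMap vietaMap_surjective finite_vietaMap_fiber
    (continuous_pi hκ : Continuous fun μ j => κ j μ)
  refine ⟨fun j μ => f μ j, fun j => (continuous_apply j).comp hf, fun μ => ?_⟩
  have hroots := roots_X_pow_add_sum_vietaMap (f μ)
  rw [hfκ μ] at hroots
  exact hroots.symm

/-- The roots of a monic degree-`n` complex polynomial with coefficients depending
continuously on a real parameter can be parametrized by `n` continuous functions. -/
theorem stmt_7 (n : ℕ) (hn : 1 ≤ n) (κ : Fin n → ℝ → ℂ) (hκ : ∀ j, Continuous (κ j)) :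
    ∃ lam : Fin n → ℝ → ℂ, (∀ j, Continuous (lam j)) ∧
      ∀ μ : ℝ,
        (Finset.univ.val.map fun j : Fin n => lam j μ) =
          (Polynomial.X ^ n +
            ∑ j : Fin n, Polynomial.C (κ j μ) * Polynomial.X ^ (j : ℕ)).roots :=
  stmt_7_general n κ hκ
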